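/- arXiv:1504.02625 — 3 statements merged into one kernel-verified Lean document; each statement's English description precedes it below -/
import Mathlib

section
/- For every λ ∈ ℂ \ (σ(T₁) ∪ σ(T₂) ∪ D₀(T)), the operator T₁ + T₂ − λE is invertible on H with bounded inverse R_λ(T), and R_λ(T) = −(1/λ)·(E − (1/λ²)W₁(1/λ))⁻¹ · (E − (1/λ)T₂)⁻¹ · (E − (1/λ)T₁)⁻¹. -/
open MeasureTheory Complex

noncomputable section

/-- The measure on `ℝ` given by restricting Lebesgue measure to `[a,b]`. -/
abbrev muI (a b : ℝ) : MeasureTheory.Measure ℝ :=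
  MeasureTheory.volume.restrict (Set.Icc a b)

section helpers

/-- Abstract part: finite rank perturbations of the identity. -/
theorem aux_finrank {H : Type*} [NormedAddCommGroup H] [InnerProductSpace ℂ H] [CompleteSpace H]
    (F : H →L[ℂ] H) (V : Submodule ℂ H) [FiniteDimensional ℂ V] (hV : ∀ f, F f ∈ V)
    (hinj : ∀ g, F g = g → g = 0) : IsUnit (1 - F) := by
  have hker : LinearMap.ker ((1 - F : H →L[ℂ] H) : H →ₗ[ℂ] H) = ⊥ := by
    rw [LinearMap.ker_eq_bot']
    intro g hg
    apply hinj
    have : g - F g = 0 := by simpa using hg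
    exact (sub_eq_zero.mp this).symm
  have hrange : LinearMap.range ((1 - F : H →L[ℂ] H) : H →ₗ[ℂ] H) = ⊤ := by
    rw [LinearMap.range_eq_top]
    let L : V →ₗ[ℂ] V := ((1 - F : H →L[ℂ] H) : H →ₗ[ℂ] H).restrict (p := V) (q := V) (by
      intro v hv
      have : v - F v ∈ V := V.sub_mem hv (hV v)
      simpa using this)
    have hL : Function.Injective L := by
      rw [← LinearMap.ker_eq_bot, LinearMap.ker_eq_bot']
      intro v hv
      have h2 : ((L v : V) : H) = 0 := by rw [hv]; rfl
      have : (v : H) - F v = 0 := by simpa [L] using h2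
      exact Subtype.ext (hinj _ (sub_eq_zero.mp this).symm)
    have hLs := LinearMap.injective_iff_surjective.mp hL
    intro g
    obtain ⟨v, hv⟩ := hLs ⟨F g, hV g⟩
    refine ⟨g + v, ?_⟩
    have h2 : (v : H) - F v = F g := by
      have := congrArg (Subtype.val) hv
      simpa [L] using this
    have h3 : (1 - F : H →L[ℂ] H) (g + v) = (g - F g) + ((v : H) - F v) := by
      simp only [ContinuousLinearMap.sub_apply, ContinuousLinearMap.one_apply, map_add]
      try abel
    show (1 - F : H →L[ℂ] H) (g + v) = g
    rw [h3, h2]; abel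
  let e := ContinuousLinearEquiv.ofBijective (1 - F : H →L[ℂ] H) hker hrange
  refine ⟨⟨1 - F, e.symm, ?_, ?_⟩, rfl⟩
  · ext x
    exact ContinuousLinearEquiv.ofBijective_apply_symm_apply _ hker hrange x
  · ext x
    exact ContinuousLinearEquiv.ofBijective_symm_apply_apply _ hker hrange x

/-- Abstract part: the operator identity. -/
theorem aux_ring {A : Type*} [Ring A] [Algebra ℂ A] (T1 T2 S W : A) (lam : ℂ) (hl : lam ≠ 0)
    (hS : (1 - lam⁻¹ • T1) * S = T1) (hW : (1 - lam⁻¹ • T2) * W = S * T2) :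
    T1 + T2 - lam • (1 : A) =
      (-lam) • ((1 - lam⁻¹ • T1) * (1 - lam⁻¹ • T2) * (1 - (lam ^ 2)⁻¹ • W)) := by
  have h1 : (1 - lam⁻¹ • T1) * (1 - lam⁻¹ • T2) * (1 - (lam ^ 2)⁻¹ • W)
      = (1 - lam⁻¹ • T1) * (1 - lam⁻¹ • T2) - (lam ^ 2)⁻¹ • (T1 * T2) := by
    rw [mul_sub, mul_one, mul_smul_comm, mul_assoc _ _ W, hW, ← mul_assoc, hS]
  rw [h1]
  have h2 : (1 - lam⁻¹ • T1) * (1 - lam⁻¹ • T2)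
      = 1 - lam⁻¹ • T1 - lam⁻¹ • T2 + (lam ^ 2)⁻¹ • (T1 * T2) := by
    simp only [sub_mul, mul_sub, one_mul, mul_one, smul_mul_assoc, mul_smul_comm, smul_sub, smul_smul]
    rw [pow_two, mul_inv]; abel
  rw [h2, add_sub_cancel_right, smul_sub, smul_sub, smul_smul, smul_smul]
  have : -lam * lam⁻¹ = -1 := by field_simp
  rw [this]
  simp only [neg_smul, one_smul]; abel

theorem aux_main {H : Type*} [NormedAddCommGroup H] [InnerProductSpace ℂ H] [CompleteSpace H]
    (T1 T2 S W : H →L[ℂ] H) (lam : ℂ) (hl : lam ≠ 0)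
    (h1 : lam ∉ spectrum ℂ T1) (h2 : lam ∉ spectrum ℂ T2)
    (hS : (1 - lam⁻¹ • T1) * S = T1) (hW : (1 - lam⁻¹ • T2) * W = S * T2)
    (V : Submodule ℂ H) [FiniteDimensional ℂ V] (hV : ∀ f, T1 (T2 f) ∈ V)
    (hinj : ∀ g, ((lam ^ 2)⁻¹ • W) g = g → g = 0) :
    ∃ R RW Rt2 Rt1 : H →L[ℂ] H,
        RW * (1 - (lam ^ 2)⁻¹ • W) = 1 ∧ (1 - (lam ^ 2)⁻¹ • W) * RW = 1 ∧
        Rt2 * (1 - lam⁻¹ • T2) = 1 ∧ (1 - lam⁻¹ • T2) * Rt2 = 1 ∧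
        Rt1 * (1 - lam⁻¹ • T1) = 1 ∧ (1 - lam⁻¹ • T1) * Rt1 = 1 ∧
        R = (-lam⁻¹) • (RW * Rt2 * Rt1) ∧
        (T1 + T2 - lam • 1) * R = 1 ∧ R * (T1 + T2 - lam • 1) = 1 := by
  have key : ∀ T : H →L[ℂ] H, lam ∉ spectrum ℂ T → IsUnit (1 - lam⁻¹ • T) := by
    intro T hT
    have hu := spectrum.notMem_iff.mp hT
    have : (1 - lam⁻¹ • T) = (Units.mk0 lam hl)⁻¹ • (algebraMap ℂ (H →L[ℂ] H) lam - T) := by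
      rw [Algebra.algebraMap_eq_smul_one, Units.smul_def]
      simp [smul_sub, smul_smul, hl]
    rw [this]
    exact hu.smul _
  obtain ⟨U1, hU1⟩ := key T1 h1
  obtain ⟨U2, hU2⟩ := key T2 h2
  have hSe : S = (↑U1⁻¹ : H →L[ℂ] H) * T1 := by
    rw [← hU1] at hS; rw [← hS, Units.inv_mul_cancel_left]
  have hWe : W = (↑U2⁻¹ : H →L[ℂ] H) * ((↑U1⁻¹ : H →L[ℂ] H) * (T1 * T2)) := by
    rw [← hU2, hSe, mul_assoc] at hW
    rw [← hW, Units.inv_mul_cancel_left]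
  let Q : H →L[ℂ] H := (lam ^ 2)⁻¹ • ((↑U2⁻¹ : H →L[ℂ] H) * (↑U1⁻¹ : H →L[ℂ] H))
  have hQ : (lam ^ 2)⁻¹ • W = Q * (T1 * T2) := by
    rw [hWe]; simp only [Q, smul_mul_assoc, mul_assoc]
  obtain ⟨U3, hU3⟩ := aux_finrank ((lam ^ 2)⁻¹ • W) (V.map (Q : H →ₗ[ℂ] H)) (by
    intro f
    rw [hQ]
    exact Submodule.mem_map_of_mem (hV f)) hinj
  have hid := aux_ring T1 T2 S W lam hl hS hW
  rw [hid, ← hU1, ← hU2, ← hU3]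
  refine ⟨_, ↑U3⁻¹, ↑U2⁻¹, ↑U1⁻¹, by simp, by simp, by simp, by simp, by simp, by simp, rfl, ?_, ?_⟩
  · rw [smul_mul_smul_comm]
    simp [mul_assoc, hl]
  · rw [smul_mul_smul_comm]
    simp [mul_assoc, hl]

variable {μ ν : Measure ℝ} [IsFiniteMeasure μ] [IsFiniteMeasure ν]

theorem aux_memLp {u v : ℝ → ℂ} (hu : MemLp u 2 μ) (hv : MemLp v 2 ν) :
    MemLp (fun z : ℝ × ℝ => u z.1 * v z.2) 2 (μ.prod ν) := by
  have hm : AEStronglyMeasurable (fun z : ℝ × ℝ => u z.1 * v z.2) (μ.prod ν) :=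
    hu.1.comp_fst.mul hv.1.comp_snd
  rw [memLp_two_iff_integrable_sq_norm hm]
  have h1 := (memLp_two_iff_integrable_sq_norm hu.1).mp hu
  have h2 := (memLp_two_iff_integrable_sq_norm hv.1).mp hv
  have := h1.mul_prod h2
  refine this.congr (Filter.Eventually.of_forall fun z => ?_)
  simp [mul_pow]

theorem aux_snd {q : ℝ → Prop} (h : ∀ᵐ y ∂ν, q y) : ∀ᵐ z ∂(μ.prod ν), q z.2 :=
  Measure.quasiMeasurePreserving_snd.ae h

theorem aux_fst {q : ℝ → Prop} (h : ∀ᵐ y ∂μ, q y) : ∀ᵐ z ∂(μ.prod ν), q z.1 :=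
  Measure.quasiMeasurePreserving_fst.ae h

theorem aux_slice {q : ℝ × ℝ → Prop} (h : ∀ᵐ z ∂(μ.prod ν), q z) :
    ∀ᵐ y ∂ν, ∀ᵐ s ∂μ, q (s, y) := by
  have h2 : ∀ᵐ z ∂(ν.prod μ), q z.swap :=
    (Measure.measurePreserving_swap (μ := ν) (ν := μ)).quasiMeasurePreserving.ae h
  exact Measure.ae_ae_of_ae_prod h2

theorem aux_int {F G : ℝ × ℝ → ℂ} (hF : MemLp F 2 (μ.prod ν)) (hG : MemLp G 2 (μ.prod ν)) :
    Integrable (fun z => star (F z) * G z) (μ.prod ν) := hF.star.integrable_mul hG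

theorem aux_int1 {u v : ℝ → ℂ} (hF : MemLp u 2 μ) (hG : MemLp v 2 μ) :
    Integrable (fun z => star (u z) * v z) μ := hF.star.integrable_mul hG

theorem aux_sliceInt {u : ℝ → ℂ} (hu : MemLp u 2 μ) (f : Lp ℂ 2 (μ.prod ν)) :
    ∀ᵐ y ∂ν, Integrable (fun s => star (u s) * f (s, y)) μ := by
  have h1 : MemLp (fun z : ℝ × ℝ => u z.1 * (1 : ℂ)) 2 (μ.prod ν) :=
    aux_memLp (v := fun _ => 1) hu (memLp_const 1)
  simp only [mul_one] at h1
  exact (aux_int h1 (Lp.memLp f)).prod_left_ae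

theorem aux_sliceInt2 {u : ℝ → ℂ} (hu : MemLp u 2 ν) (f : Lp ℂ 2 (μ.prod ν)) :
    ∀ᵐ x ∂μ, Integrable (fun s => star (u s) * f (x, s)) ν := by
  have h1 : MemLp (fun z : ℝ × ℝ => (1 : ℂ) * u z.2) 2 (μ.prod ν) :=
    aux_memLp (u := fun _ => 1) (memLp_const 1) hu
  simp only [one_mul] at h1
  exact (aux_int h1 (Lp.memLp f)).prod_right_ae

theorem aux_T1 {n : ℕ} {φ : Fin n → ℝ → ℂ} (hφL2 : ∀ k, MemLp (φ k) 2 μ) (h : Fin n → ℝ → ℝ)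
    (T1 : Lp ℂ 2 (μ.prod ν) →L[ℂ] Lp ℂ 2 (μ.prod ν))
    (hT1 : ∀ f : Lp ℂ 2 (μ.prod ν), ∀ᵐ z ∂(μ.prod ν),
        T1 f z = ∫ s, (∑ k, φ k z.1 * star (φ k s) * (h k z.2 : ℂ)) * f (s, z.2) ∂μ)
    (f : Lp ℂ 2 (μ.prod ν)) :
    ∀ᵐ z ∂(μ.prod ν),
        T1 f z = ∑ k, (h k z.2 : ℂ) * φ k z.1 * ∫ s, star (φ k s) * f (s, z.2) ∂μ := by
  have hi : ∀ᵐ z ∂(μ.prod ν), ∀ k, Integrable (fun s => star (φ k s) * f (s, z.2)) μ :=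
    aux_snd (ae_all_iff.mpr fun k => aux_sliceInt (hφL2 k) f)
  filter_upwards [hT1 f, hi] with z h1 h2
  rw [h1]
  simp only [← integral_const_mul]
  rw [← integral_finsetSum _ (fun k _ => (h2 k).const_mul _)]
  congr 1; ext s
  rw [Finset.sum_mul]
  refine Finset.sum_congr rfl fun k _ => ?_
  ring

theorem aux_T2 {n : ℕ} {φ : Fin n → ℝ → ℂ} (hφL2 : ∀ k, MemLp (φ k) 2 ν) (h : Fin n → ℝ → ℝ)
    (T1 : Lp ℂ 2 (μ.prod ν) →L[ℂ] Lp ℂ 2 (μ.prod ν))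
    (hT1 : ∀ f : Lp ℂ 2 (μ.prod ν), ∀ᵐ z ∂(μ.prod ν),
        T1 f z = ∫ t, (∑ j, (h j z.1 : ℂ) * φ j z.2 * star (φ j t)) * f (z.1, t) ∂ν)
    (f : Lp ℂ 2 (μ.prod ν)) :
    ∀ᵐ z ∂(μ.prod ν),
        T1 f z = ∑ k, (h k z.1 : ℂ) * φ k z.2 * ∫ s, star (φ k s) * f (z.1, s) ∂ν := by
  have hi : ∀ᵐ z ∂(μ.prod ν), ∀ k, Integrable (fun s => star (φ k s) * f (z.1, s)) ν :=
    aux_fst (ae_all_iff.mpr fun k => aux_sliceInt2 (hφL2 k) f)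
  filter_upwards [hT1 f, hi] with z h1 h2
  rw [h1]
  simp only [← integral_const_mul]
  rw [← integral_finsetSum _ (fun k _ => (h2 k).const_mul _)]
  congr 1; ext s
  rw [Finset.sum_mul]
  refine Finset.sum_congr rfl fun k _ => ?_
  ring

/-- `T1` applied to a function which is a.e. `F`. -/
theorem aux_T1F {n : ℕ} {φ : Fin n → ℝ → ℂ} (h : Fin n → ℝ → ℝ)
    (T1 : Lp ℂ 2 (μ.prod ν) →L[ℂ] Lp ℂ 2 (μ.prod ν))
    (hT1 : ∀ f : Lp ℂ 2 (μ.prod ν), ∀ᵐ z ∂(μ.prod ν),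
        T1 f z = ∑ k, (h k z.2 : ℂ) * φ k z.1 * ∫ s, star (φ k s) * f (s, z.2) ∂μ)
    (f : Lp ℂ 2 (μ.prod ν)) (F : ℝ × ℝ → ℂ) (hF : ∀ᵐ z ∂(μ.prod ν), f z = F z) :
    ∀ᵐ z ∂(μ.prod ν),
        T1 f z = ∑ k, (h k z.2 : ℂ) * φ k z.1 * ∫ s, star (φ k s) * F (s, z.2) ∂μ := by
  filter_upwards [hT1 f, aux_snd (μ := μ) (aux_slice hF)] with z h1 h2
  rw [h1]
  refine Finset.sum_congr rfl fun k _ => ?_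
  congr 1
  apply integral_congr_ae
  filter_upwards [h2] with s hs
  rw [hs]

theorem aux_inj {H : Type*} [NormedAddCommGroup H] [InnerProductSpace ℂ H]
    (T : H →L[ℂ] H) (lam : ℂ) (hT : lam ∉ spectrum ℂ T) (f : H) (hf : T f = lam • f) : f = 0 := by
  obtain ⟨U, hU⟩ := spectrum.notMem_iff.mp hT
  have h0 : (U : H →L[ℂ] H) f = 0 := by
    rw [hU, Algebra.algebraMap_eq_smul_one]; simp [hf]
  have : ((↑U⁻¹ : H →L[ℂ] H) * (U : H →L[ℂ] H)) f = 0 := by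
    rw [ContinuousLinearMap.mul_apply, h0, map_zero]
  simpa using this

/-- `h k` avoids points of the resolvent set. -/
theorem aux_ne {n : ℕ} {φ : Fin n → ℝ → ℂ} (hφL2 : ∀ k, MemLp (φ k) 2 μ)
    (hφON : ∀ i j, ∫ x, star (φ i x) * φ j x ∂μ = if i = j then 1 else 0)
    (h : Fin n → ℝ → ℝ) (hhmeas : ∀ k, Measurable (h k))
    (T1 : Lp ℂ 2 (μ.prod ν) →L[ℂ] Lp ℂ 2 (μ.prod ν))
    (hT1 : ∀ f : Lp ℂ 2 (μ.prod ν), ∀ᵐ z ∂(μ.prod ν),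
        T1 f z = ∑ k, (h k z.2 : ℂ) * φ k z.1 * ∫ s, star (φ k s) * f (s, z.2) ∂μ)
    (lam : ℂ) (hlam : lam ∉ spectrum ℂ T1) (k : Fin n) : ∀ᵐ y ∂ν, (h k y : ℂ) ≠ lam := by
  classical
  set A : Set ℝ := {y | (h k y : ℂ) = lam} with hA
  have hAm : MeasurableSet A :=
    (Complex.measurable_ofReal.comp (hhmeas k)) (measurableSet_singleton lam)
  let v : ℝ → ℂ := A.indicator fun _ => 1
  have hv : MemLp v 2 ν := (memLp_const (1 : ℂ)).indicator hAm
  have hm := aux_memLp (hφL2 k) hv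
  have hf := hm.coeFn_toLp
  have h0 : hm.toLp = 0 := by
    apply aux_inj T1 lam hlam
    apply Lp.ext
    filter_upwards [aux_T1F h T1 hT1 _ _ hf, hf, Lp.coeFn_smul lam hm.toLp] with z h1 h2 h3
    rw [h1, h3, Pi.smul_apply, h2]
    have : ∀ l, ∫ s, star (φ l s) * (φ k s * v z.2) ∂μ = (if l = k then 1 else 0) * v z.2 := by
      intro l
      rw [← hφON l k, ← integral_mul_const]
      congr 1; ext s; ring
    simp only [this]
    rw [Finset.sum_eq_single k (by intro b _ hb; simp [hb]) (by simp)]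
    by_cases hz : z.2 ∈ A
    · have : (h k z.2 : ℂ) = lam := hz
      simp [v, hz, this]
    · simp [v, hz]
  rw [h0] at hf
  filter_upwards [aux_slice ((Lp.coeFn_zero ℂ 2 (μ.prod ν)).symm.trans hf)] with y hy hyA
  have hyA' : y ∈ A := hyA
  have hz : ∀ᵐ s ∂μ, φ k s = 0 := by
    filter_upwards [hy] with s hs
    simpa [v, hyA'] using hs.symm
  have h1 := hφON k k
  have h2 : ∫ x, star (φ k x) * φ k x ∂μ = 0 := by
    rw [← integral_zero ℝ ℂ (μ := μ)]
    apply integral_congr_ae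
    filter_upwards [hz] with s hs
    simp [hs]
  rw [h2] at h1
  simp at h1

/-- `(1 - τ T1) S1 = T1`. -/
theorem aux_S1 {n : ℕ} {φ : Fin n → ℝ → ℂ} (hφL2 : ∀ k, MemLp (φ k) 2 μ)
    (hφON : ∀ i j, ∫ x, star (φ i x) * φ j x ∂μ = if i = j then 1 else 0)
    (h : Fin n → ℝ → ℝ)
    (T1 : Lp ℂ 2 (μ.prod ν) →L[ℂ] Lp ℂ 2 (μ.prod ν))
    (hT1 : ∀ f : Lp ℂ 2 (μ.prod ν), ∀ᵐ z ∂(μ.prod ν),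
        T1 f z = ∑ k, (h k z.2 : ℂ) * φ k z.1 * ∫ s, star (φ k s) * f (s, z.2) ∂μ)
    (lam : ℂ) (hl0 : lam ≠ 0) (hne : ∀ k, ∀ᵐ y ∂ν, (h k y : ℂ) ≠ lam)
    (S : Lp ℂ 2 (μ.prod ν) →L[ℂ] Lp ℂ 2 (μ.prod ν))
    (hS : ∀ f : Lp ℂ 2 (μ.prod ν), ∀ᵐ z ∂(μ.prod ν),
        S f z = ∑ k, ((h k z.2 : ℂ) / (1 - lam⁻¹ * (h k z.2 : ℂ))) *
          (φ k z.1 * ∫ s, star (φ k s) * f (s, z.2) ∂μ)) :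
    (1 - lam⁻¹ • T1) * S = T1 := by
  classical
  ext1 f
  show S f - lam⁻¹ • T1 (S f) = T1 f
  apply Lp.ext
  filter_upwards [aux_T1F h T1 hT1 _ _ (hS f), hS f, hT1 f, Lp.coeFn_smul lam⁻¹ (T1 (S f)),
    Lp.coeFn_sub (S f) (lam⁻¹ • T1 (S f)), aux_snd (μ := μ) (ae_all_iff.mpr hne)]
    with z h1 h2 h3 h4 h5 h6
  rw [h5, Pi.sub_apply, h4, Pi.smul_apply, h1, h2, h3, smul_eq_mul, Finset.mul_sum,
    ← Finset.sum_sub_distrib]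
  refine Finset.sum_congr rfl fun k _ => ?_
  have hI : ∫ s, star (φ k s) * ∑ l, ((h l z.2 : ℂ) / (1 - lam⁻¹ * (h l z.2 : ℂ))) *
          (φ l s * ∫ s', star (φ l s') * f (s', z.2) ∂μ) ∂μ
      = ((h k z.2 : ℂ) / (1 - lam⁻¹ * (h k z.2 : ℂ))) *
          ∫ s', star (φ k s') * f (s', z.2) ∂μ := by
    have e : ∀ s, star (φ k s) * ∑ l, ((h l z.2 : ℂ) / (1 - lam⁻¹ * (h l z.2 : ℂ))) *
          (φ l s * ∫ s', star (φ l s') * f (s', z.2) ∂μ)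
        = ∑ l, (star (φ k s) * φ l s) * (((h l z.2 : ℂ) / (1 - lam⁻¹ * (h l z.2 : ℂ))) *
          ∫ s', star (φ l s') * f (s', z.2) ∂μ) := by
      intro s
      rw [Finset.mul_sum]
      refine Finset.sum_congr rfl fun l _ => ?_
      ring
    simp only [e]
    rw [integral_finsetSum _ (fun l _ => (aux_int1 (hφL2 k) (hφL2 l)).mul_const _)]
    simp only [integral_mul_const, hφON]
    rw [Finset.sum_eq_single k (by intro b _ hb; simp [hb.symm]) (by simp)]
    simp
  rw [hI]
  have hd : 1 - lam⁻¹ * (h k z.2 : ℂ) ≠ 0 := by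
    intro h0
    apply h6 k
    have := sub_eq_zero.mp h0
    field_simp at this
    exact this.symm
  generalize (∫ s', star (φ k s') * f (s', z.2) ∂μ) = I
  have : (h k z.2 : ℂ) / (1 - lam⁻¹ * (h k z.2 : ℂ)) * (1 - lam⁻¹ * (h k z.2 : ℂ)) = h k z.2 :=
    div_mul_cancel₀ _ hd
  linear_combination (φ k z.1 * I) * this

/-- `T1 T2` has finite rank. -/
theorem aux_T1T2 {n : ℕ} {φ : Fin n → ℝ → ℂ} (hφL2 : ∀ k, MemLp (φ k) 2 μ)
    (h : Fin n → ℝ → ℝ) (hhmeas : ∀ k, Measurable (h k))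
    (hhbdd : ∀ k, ∃ C : ℝ, ∀ᵐ y ∂ν, |h k y| ≤ C)
    {m : ℕ} {ψ : Fin m → ℝ → ℂ} (hψL2 : ∀ k, MemLp (ψ k) 2 ν)
    (p : Fin m → ℝ → ℝ) (hpmeas : ∀ j, Measurable (p j))
    (hpbdd : ∀ j, ∃ C : ℝ, ∀ᵐ x ∂μ, |p j x| ≤ C)
    (T1 T2 : Lp ℂ 2 (μ.prod ν) →L[ℂ] Lp ℂ 2 (μ.prod ν))
    (hT1 : ∀ f : Lp ℂ 2 (μ.prod ν), ∀ᵐ z ∂(μ.prod ν),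
        T1 f z = ∑ k, (h k z.2 : ℂ) * φ k z.1 * ∫ s, star (φ k s) * f (s, z.2) ∂μ)
    (hT2 : ∀ f : Lp ℂ 2 (μ.prod ν), ∀ᵐ z ∂(μ.prod ν),
        T2 f z = ∑ k, (p k z.1 : ℂ) * ψ k z.2 * ∫ s, star (ψ k s) * f (z.1, s) ∂ν) :
    ∃ V : Submodule ℂ (Lp ℂ 2 (μ.prod ν)), FiniteDimensional ℂ V ∧ ∀ f, T1 (T2 f) ∈ V := by
  have bd : ∀ {ρ : Measure ℝ} {g : ℝ → ℝ} {u : ℝ → ℂ}, Measurable g →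
      (∃ C : ℝ, ∀ᵐ y ∂ρ, |g y| ≤ C) → MemLp u 2 ρ → MemLp (fun y => (g y : ℂ) * u y) 2 ρ := by
    rintro ρ g u hg ⟨C, hC⟩ hu
    refine MemLp.of_le_mul (c := C) hu
      ((Complex.measurable_ofReal.comp hg).aestronglyMeasurable.mul hu.1) ?_
    filter_upwards [hC] with y hy
    rw [norm_mul, Complex.norm_real, Real.norm_eq_abs]
    gcongr
  have hE : ∀ q : Fin n × Fin m, MemLp (fun z : ℝ × ℝ =>
      φ q.1 z.1 * ((h q.1 z.2 : ℂ) * ψ q.2 z.2)) 2 (μ.prod ν) := fun q =>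
    aux_memLp (hφL2 q.1) (bd (hhmeas q.1) (hhbdd q.1) (hψL2 q.2))
  let E : Fin n × Fin m → Lp ℂ 2 (μ.prod ν) := fun q => (hE q).toLp
  refine ⟨Submodule.span ℂ (Set.range E), FiniteDimensional.span_of_finite ℂ (Set.finite_range E),
    fun f => ?_⟩
  let cc : Fin n × Fin m → ℂ := fun q =>
    ∫ s, star (φ q.1 s) * ((p q.2 s : ℂ) * ∫ t, star (ψ q.2 t) * f (s, t) ∂ν) ∂μ
  have hint : ∀ k j, Integrable
      (fun s => star (φ k s) * ((p j s : ℂ) * ∫ t, star (ψ j t) * f (s, t) ∂ν)) μ := by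
    intro k j
    have h1 := (aux_int (aux_memLp (bd (hpmeas j) (hpbdd j) (hφL2 k)) (hψL2 j))
      (Lp.memLp f)).integral_prod_left
    refine h1.congr (Filter.Eventually.of_forall fun s => ?_)
    simp only [← integral_const_mul]
    congr 1; ext t
    simp only [star_mul', Complex.star_def, Complex.conj_ofReal]
    ring
  have heq : T1 (T2 f) = ∑ q, cc q • E q := by
    apply Lp.ext
    have hs : ∀ᵐ z ∂(μ.prod ν), ∀ q, (cc q • E q : Lp ℂ 2 (μ.prod ν)) z = cc q * E q z :=
      ae_all_iff.mpr fun q => Lp.coeFn_smul (cc q) (E q)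
    have hEz : ∀ᵐ z ∂(μ.prod ν), ∀ q, E q z = φ q.1 z.1 * ((h q.1 z.2 : ℂ) * ψ q.2 z.2) :=
      ae_all_iff.mpr fun q => (hE q).coeFn_toLp
    filter_upwards [aux_T1F h T1 hT1 _ _ (hT2 f), hs, hEz,
      Lp.coeFn_finsetSum (Finset.univ) (fun q => cc q • E q)] with z h1 h2 h3 h4
    rw [h1, h4, Finset.sum_apply]
    simp only [h2, h3]
    rw [Fintype.sum_prod_type]
    refine Finset.sum_congr rfl fun k _ => ?_
    have e : ∀ s, star (φ k s) * ∑ j, (p j s : ℂ) * ψ j z.2 * ∫ t, star (ψ j t) * f (s, t) ∂ν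
        = ∑ j, star (φ k s) * ((p j s : ℂ) * ∫ t, star (ψ j t) * f (s, t) ∂ν) * ψ j z.2 := by
      intro s
      rw [Finset.mul_sum]
      refine Finset.sum_congr rfl fun l _ => ?_
      ring
    simp only [e]
    rw [integral_finsetSum _ (fun j _ => (hint k j).mul_const _), Finset.mul_sum]
    refine Finset.sum_congr rfl fun j _ => ?_
    rw [integral_mul_const]
    show _ * (cc (k, j) * _) = _
    ring
  rw [heq]
  exact Submodule.sum_mem _ fun q _ => Submodule.smul_mem _ _ (Submodule.subset_span ⟨q, rfl⟩)

end helpers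

/-- A nonzero function orthogonal to finitely many given ones. -/
theorem aux_orth (a b : ℝ) (hab : a < b) {n : ℕ} {φ : Fin n → ℝ → ℂ}
    (hφL2 : ∀ k, MemLp (φ k) 2 (muI a b)) :
    ∃ g : ℝ → ℂ, MemLp g 2 (muI a b) ∧ (∀ k, ∫ s, star (φ k s) * g s ∂(muI a b) = 0) ∧
      ¬ (∀ᵐ s ∂(muI a b), g s = 0) := by
  classical
  let G : Polynomial ℂ → ℝ → ℂ := fun q s => q.eval (s : ℂ)
  have hGc : ∀ q, Continuous (G q) := fun q => q.continuous.comp Complex.continuous_ofReal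
  have hG : ∀ q, MemLp (G q) 2 (muI a b) := by
    intro q
    obtain ⟨C, hC⟩ := isCompact_Icc.exists_bound_of_continuousOn (hGc q).continuousOn (s := Set.Icc a b)
    refine MemLp.of_bound (hGc q).aestronglyMeasurable C ?_
    exact (ae_restrict_iff' measurableSet_Icc).mpr (Filter.Eventually.of_forall hC)
  let L : Polynomial.degreeLT ℂ (n+1) →ₗ[ℂ] (Fin n → ℂ) :=
    { toFun := fun q k => ∫ s, star (φ k s) * G q s ∂(muI a b)
      map_add' := by
        intro q r
        ext k
        simp only [Pi.add_apply]
        rw [← integral_add (aux_int1 (hφL2 k) (hG q)) (aux_int1 (hφL2 k) (hG r))]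
        congr 1; ext s; simp [G, mul_add]
      map_smul' := by
        intro c q
        ext k
        simp only [Pi.smul_apply, RingHom.id_apply, smul_eq_mul]
        rw [← integral_const_mul]
        congr 1; ext s; simp [G]; ring }
  haveI : FiniteDimensional ℂ (Polynomial.degreeLT ℂ (n+1)) :=
    Module.Finite.equiv (Polynomial.degreeLTEquiv ℂ (n+1)).symm
  have hk : LinearMap.ker L ≠ ⊥ := by
    apply LinearMap.ker_ne_bot_of_finrank_lt
    rw [(Polynomial.degreeLTEquiv ℂ (n+1)).finrank_eq]
    simp
  obtain ⟨q, hq, hq0⟩ := (Submodule.ne_bot_iff _).mp hk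
  refine ⟨G q, hG q, fun k => congrFun (LinearMap.mem_ker.mp hq) k, ?_⟩
  intro hz
  have hq1 : (q : Polynomial ℂ) ≠ 0 := fun h0 => hq0 (Subtype.ext h0)
  have hfin : Set.Finite {s : ℝ | G q s = 0} := by
    have := (Polynomial.finite_setOf_isRoot hq1).preimage
      (f := ((↑) : ℝ → ℂ)) (Complex.ofReal_injective.injOn)
    exact this
  have h1 : ∀ᵐ s ∂(muI a b), G q s ≠ 0 :=
    ae_restrict_of_ae (by
      have : volume {s : ℝ | G q s = 0} = 0 := hfin.measure_zero _
      rw [ae_iff]; simpa using this)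
  have h2 : ∀ᵐ s ∂(muI a b), False := by
    filter_upwards [hz, h1] with s h3 h4 using h4 h3
  have h3 : muI a b = 0 := by
    exact ae_eq_bot.mp (Filter.eventually_false_iff_eq_bot.mp h2)
  have h4 : volume (Set.Icc a b) = 0 := by simpa [muI, Measure.restrict_eq_zero] using h3
  rw [Real.volume_Icc] at h4
  simp at h4
  linarith

theorem aux_zero (a b c d : ℝ) (hab : a < b) (hcd : c < d) {n : ℕ} {φ : Fin n → ℝ → ℂ}
    (hφL2 : ∀ k, MemLp (φ k) 2 (muI a b)) (h : Fin n → ℝ → ℝ)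
    (T1 : Lp ℂ 2 ((muI a b).prod (muI c d)) →L[ℂ] Lp ℂ 2 ((muI a b).prod (muI c d)))
    (hT1 : ∀ f : Lp ℂ 2 ((muI a b).prod (muI c d)), ∀ᵐ z ∂((muI a b).prod (muI c d)),
        T1 f z = ∑ k, (h k z.2 : ℂ) * φ k z.1 * ∫ s, star (φ k s) * f (s, z.2) ∂(muI a b)) :
    (0 : ℂ) ∈ spectrum ℂ T1 := by
  by_contra h0
  obtain ⟨g, hg, hgo, hgn⟩ := aux_orth a b hab hφL2
  have hm : MemLp (fun z : ℝ × ℝ => g z.1 * (fun _ => (1 : ℂ)) z.2) 2 ((muI a b).prod (muI c d)) :=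
    aux_memLp hg (memLp_const 1)
  have hf := hm.coeFn_toLp
  have hz : hm.toLp = 0 := by
    apply aux_inj T1 0 h0
    rw [zero_smul]
    apply Lp.ext
    filter_upwards [aux_T1F h T1 hT1 _ _ hf, Lp.coeFn_zero ℂ 2 ((muI a b).prod (muI c d))]
      with z h1 h2
    rw [h1, h2]
    simp only [mul_one, hgo]
    simp
  rw [hz] at hf
  have h1 := aux_slice ((Lp.coeFn_zero ℂ 2 ((muI a b).prod (muI c d))).symm.trans hf)
  have h2 : ∀ᵐ y ∂(muI c d), False := by
    filter_upwards [h1] with y hy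
    apply hgn
    filter_upwards [hy] with s hs
    simpa using hs.symm
  have h3 : muI c d = 0 := by
    exact ae_eq_bot.mp (Filter.eventually_false_iff_eq_bot.mp h2)
  have h4 : volume (Set.Icc c d) = 0 := by simpa [muI, Measure.restrict_eq_zero] using h3
  rw [Real.volume_Icc] at h4
  simp at h4
  linarith

theorem statement11
    (a b c d : ℝ) (hab : a < b) (hcd : c < d)
    (n : ℕ) (hn : 1 ≤ n)
    (φ : Fin n → ℝ → ℂ)
    (hφL2 : ∀ k, MemLp (φ k) 2 (muI a b))
    (hφON : ∀ i j, ∫ x, star (φ i x) * φ j x ∂(muI a b) = if i = j then 1 else 0)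
    (h : Fin n → ℝ → ℝ)
    (hhmeas : ∀ k, Measurable (h k))
    (hhbdd : ∀ k, ∃ C : ℝ, ∀ᵐ y ∂(muI c d), |h k y| ≤ C)
    (m : ℕ) (hm : 1 ≤ m)
    (ψ : Fin m → ℝ → ℂ)
    (hψL2 : ∀ j, MemLp (ψ j) 2 (muI c d))
    (hψON : ∀ i j, ∫ y, star (ψ i y) * ψ j y ∂(muI c d) = if i = j then 1 else 0)
    (p : Fin m → ℝ → ℝ)
    (hpmeas : ∀ j, Measurable (p j))
    (hpbdd : ∀ j, ∃ C : ℝ, ∀ᵐ x ∂(muI a b), |p j x| ≤ C)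
    (T1 T2 : Lp ℂ 2 ((muI a b).prod (muI c d)) →L[ℂ] Lp ℂ 2 ((muI a b).prod (muI c d)))
    (hT1sa : IsSelfAdjoint T1) (hT2sa : IsSelfAdjoint T2)
    (hT1 : ∀ f : Lp ℂ 2 ((muI a b).prod (muI c d)),
      ∀ᵐ z ∂((muI a b).prod (muI c d)),
        T1 f z = ∫ s, (∑ k, φ k z.1 * star (φ k s) * (h k z.2 : ℂ)) * f (s, z.2) ∂(muI a b))
    (hT2 : ∀ f : Lp ℂ 2 ((muI a b).prod (muI c d)),
      ∀ᵐ z ∂((muI a b).prod (muI c d)),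
        T2 f z = ∫ t, (∑ j, (p j z.1 : ℂ) * ψ j z.2 * star (ψ j t)) * f (z.1, t) ∂(muI c d))
    -- the orthogonal projections `P k`
    (P : Fin n → (Lp ℂ 2 ((muI a b).prod (muI c d)) →L[ℂ] Lp ℂ 2 ((muI a b).prod (muI c d))))
    (hP : ∀ k, ∀ f : Lp ℂ 2 ((muI a b).prod (muI c d)),
      ∀ᵐ z ∂((muI a b).prod (muI c d)),
        P k f z = φ k z.1 * ∫ s, star (φ k s) * f (s, z.2) ∂(muI a b))
    -- the operators S₁(τ)
    (S1 : ℂ → (Lp ℂ 2 ((muI a b).prod (muI c d)) →L[ℂ] Lp ℂ 2 ((muI a b).prod (muI c d))))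
    (hS1 : ∀ τ : ℂ, τ ≠ 0 → τ⁻¹ ∈ resolventSet ℂ T1 → τ⁻¹ ∈ resolventSet ℂ T2 →
      ∀ f : Lp ℂ 2 ((muI a b).prod (muI c d)),
        ∀ᵐ z ∂((muI a b).prod (muI c d)),
          S1 τ f z = ∑ k, ((h k z.2 : ℂ) / (1 - τ * (h k z.2 : ℂ))) * P k f z)
    -- the operators W₁(τ) = (E-τT₂)⁻¹ S₁(τ) T₂
    (W1 : ℂ → (Lp ℂ 2 ((muI a b).prod (muI c d)) →L[ℂ] Lp ℂ 2 ((muI a b).prod (muI c d))))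
    (hW1 : ∀ τ : ℂ, τ ≠ 0 → τ⁻¹ ∈ resolventSet ℂ T1 → τ⁻¹ ∈ resolventSet ℂ T2 →
      (1 - τ • T2) * W1 τ = S1 τ * T2)
    -- the sets D(T) and R(T)
    (DT : Set ℂ)
    (hDT : DT = {τ : ℂ | τ ≠ 0 ∧ τ⁻¹ ∈ resolventSet ℂ T1 ∧ τ⁻¹ ∈ resolventSet ℂ T2 ∧
      ∃ g : Lp ℂ 2 ((muI a b).prod (muI c d)), g ≠ 0 ∧ (τ ^ 2 • W1 τ) g = g})
    -- the set D₀(T)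
    (D0 : Set ℂ) (hD0 : D0 = (fun τ : ℂ => τ⁻¹) '' DT) :
    ∀ lam : ℂ, lam ∉ spectrum ℂ T1 ∪ spectrum ℂ T2 ∪ D0 →
      ∃ R RW Rt2 Rt1 :
          Lp ℂ 2 ((muI a b).prod (muI c d)) →L[ℂ] Lp ℂ 2 ((muI a b).prod (muI c d)),
        RW * (1 - (lam ^ 2)⁻¹ • W1 lam⁻¹) = 1 ∧ (1 - (lam ^ 2)⁻¹ • W1 lam⁻¹) * RW = 1 ∧
        Rt2 * (1 - lam⁻¹ • T2) = 1 ∧ (1 - lam⁻¹ • T2) * Rt2 = 1 ∧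
        Rt1 * (1 - lam⁻¹ • T1) = 1 ∧ (1 - lam⁻¹ • T1) * Rt1 = 1 ∧
        R = (-lam⁻¹) • (RW * Rt2 * Rt1) ∧
        (T1 + T2 - lam • 1) * R = 1 ∧ R * (T1 + T2 - lam • 1) = 1 := by
  intro lam hlam
  have hl1 : lam ∉ spectrum ℂ T1 := fun hh => hlam (Or.inl (Or.inl hh))
  have hl2 : lam ∉ spectrum ℂ T2 := fun hh => hlam (Or.inl (Or.inr hh))
  have hl3 : lam ∉ D0 := fun hh => hlam (Or.inr hh)
  have hT1' := aux_T1 hφL2 h T1 hT1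
  have hT2' := aux_T2 hψL2 p T2 hT2
  have hl0 : lam ≠ 0 := by
    rintro rfl
    exact hl1 (aux_zero a b c d hab hcd hφL2 h T1 hT1')
  have hr1 : (lam⁻¹)⁻¹ ∈ resolventSet ℂ T1 := by
    rw [inv_inv]; exact not_not.mp hl1
  have hr2 : (lam⁻¹)⁻¹ ∈ resolventSet ℂ T2 := by
    rw [inv_inv]; exact not_not.mp hl2
  have hτ : lam⁻¹ ≠ 0 := inv_ne_zero hl0
  have hS : (1 - lam⁻¹ • T1) * S1 lam⁻¹ = T1 := by
    refine aux_S1 hφL2 hφON h T1 hT1' lam hl0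
      (aux_ne hφL2 hφON h hhmeas T1 hT1' lam hl1) (S1 lam⁻¹) ?_
    intro f
    filter_upwards [hS1 lam⁻¹ hτ hr1 hr2 f, ae_all_iff.mpr fun k => hP k f] with z h1 h2
    rw [h1]
    simp only [h2]
  obtain ⟨V, hVfd, hV⟩ := aux_T1T2 hφL2 h hhmeas hhbdd hψL2 p hpmeas hpbdd T1 T2 hT1' hT2'
  refine aux_main T1 T2 (S1 lam⁻¹) (W1 lam⁻¹) lam hl0 hl1 hl2 hS (hW1 lam⁻¹ hτ hr1 hr2) V hV ?_
  intro g hg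
  by_contra hg0
  apply hl3
  rw [hD0, hDT]
  refine ⟨lam⁻¹, ⟨hτ, hr1, hr2, g, hg0, ?_⟩, inv_inv lam⟩
  rw [inv_pow]; exact hg
end
end

section
/- Zero is an eigenvalue of infinite multiplicity of the partial integral operator T = T₁ + T₂, i.e. the kernel of T₁ + T₂ is an infinite-dimensional subspace of H. -/
open MeasureTheory Complex

noncomputable section

theorem aux_poly_bdd (a b : ℝ) (q : Polynomial ℂ) :
    ∃ C : ℝ, ∀ᵐ (x : ℝ) ∂(muI a b), ‖q.eval (x : ℂ)‖ ≤ C := by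
  have hc : Continuous (fun x : ℝ => q.eval (x : ℂ)) := by fun_prop
  obtain ⟨C, hC⟩ := (isCompact_Icc (a := a) (b := b)).exists_bound_of_continuousOn hc.continuousOn
  exact ⟨C, (ae_restrict_iff' measurableSet_Icc).2 (Filter.Eventually.of_forall hC)⟩

theorem aux_poly_ne (a b : ℝ) (q : Polynomial ℂ) (hq : q ≠ 0) :
    ∀ᵐ (x : ℝ) ∂(muI a b), q.eval (x : ℂ) ≠ 0 := by
  have hfin : Set.Finite {x : ℝ | q.eval (x : ℂ) = 0} := by
    have h1 : Set.Finite {x : ℂ | q.eval x = 0} := by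
      refine (q.roots.toFinset.finite_toSet).subset ?_
      intro x hx
      simpa [hq] using hx
    exact h1.preimage (f := fun x : ℝ => (x : ℂ)) Complex.ofReal_injective.injOn
  have := hfin.measure_zero (muI a b)
  rw [ae_iff]
  simpa using this

theorem aux_poly_int (a b : ℝ) (q : Polynomial ℂ) (g : ℝ → ℂ) (hg : MemLp g 2 (muI a b)) :
    Integrable (fun x => star (g x) * q.eval (x : ℂ)) (muI a b) := by
  obtain ⟨C, hC⟩ := aux_poly_bdd a b q
  have hc : Continuous (fun x : ℝ => q.eval (x : ℂ)) := by fun_prop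
  have hi : Integrable (fun x => star (g x)) (muI a b) :=
    (hg.star.integrable (by norm_num))
  exact hi.mul_bdd (c := C) hc.aestronglyMeasurable hC

/-- Moment map of polynomials against finitely many square-integrable functions. -/
def auxL (a b : ℝ) (n : ℕ) (g : Fin n → ℝ → ℂ) (hg : ∀ k, MemLp (g k) 2 (muI a b)) :
    Polynomial ℂ →ₗ[ℂ] (Fin n → ℂ) where
  toFun q := fun k => ∫ x, star (g k x) * q.eval (x : ℂ) ∂(muI a b)
  map_add' p q := by
    funext k
    simp only [Polynomial.eval_add, mul_add, Pi.add_apply]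
    exact integral_add (aux_poly_int a b p _ (hg k)) (aux_poly_int a b q _ (hg k))
  map_smul' r q := by
    funext k
    simp only [Polynomial.eval_smul, smul_eq_mul, Pi.smul_apply, RingHom.id_apply]
    rw [← integral_const_mul]
    congr 1
    funext x
    ring

theorem auxL_ker_inf (a b : ℝ) (n : ℕ) (g : Fin n → ℝ → ℂ) (hg : ∀ k, MemLp (g k) 2 (muI a b)) :
    ¬ FiniteDimensional ℂ (LinearMap.ker (auxL a b n g hg)) := by
  intro hfd
  have h1 : (LinearMap.ker (auxL a b n g hg)).FG := (Submodule.fg_iff_finiteDimensional _).2 hfd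
  have h2 : (Submodule.map (auxL a b n g hg) ⊤).FG := IsNoetherian.noetherian _
  have h3 : (⊤ : Submodule ℂ (Polynomial ℂ)).FG :=
    Submodule.fg_of_fg_map_of_fg_inf_ker (auxL a b n g hg) h2 (by simpa using h1)
  exact Polynomial.not_finite (R := ℂ) ⟨h3⟩

theorem aux_memLp_s12 (a b c d : ℝ) (p q : Polynomial ℂ) :
    MemLp (fun z : ℝ × ℝ => p.eval (z.1 : ℂ) * q.eval (z.2 : ℂ)) 2
      ((muI a b).prod (muI c d)) := by
  obtain ⟨C, hC⟩ := aux_poly_bdd a b p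
  obtain ⟨D, hD⟩ := aux_poly_bdd c d q
  have hc : Continuous (fun z : ℝ × ℝ => p.eval (z.1 : ℂ) * q.eval (z.2 : ℂ)) := by fun_prop
  refine MemLp.of_bound hc.aestronglyMeasurable (C * D) ?_
  filter_upwards [Measure.quasiMeasurePreserving_fst.ae hC,
    Measure.quasiMeasurePreserving_snd.ae hD] with z h1 h2
  rw [norm_mul]
  exact mul_le_mul h1 h2 (norm_nonneg _) ((norm_nonneg _).trans h1)

/-- The linear map sending `p` to the class of `p(x) q(y)`. -/
def auxM (a b c d : ℝ) (q : Polynomial ℂ) :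
    Polynomial ℂ →ₗ[ℂ] Lp ℂ 2 ((muI a b).prod (muI c d)) where
  toFun p := (aux_memLp_s12 a b c d p q).toLp _
  map_add' p r := by
    rw [← MemLp.toLp_add]
    congr 1
    funext z
    simp [add_mul]
  map_smul' r p := by
    simp only [RingHom.id_apply]
    rw [← MemLp.toLp_const_smul]
    congr 1
    funext z
    simp [mul_assoc]

theorem auxM_inj (a b c d : ℝ) (hab : a < b) (hcd : c < d) (q : Polynomial ℂ) (hq : q ≠ 0) :
    Function.Injective (auxM a b c d q) := by
  rw [injective_iff_map_eq_zero]
  intro p hp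
  by_contra hp0
  have h1 : (fun z : ℝ × ℝ => p.eval (z.1 : ℂ) * q.eval (z.2 : ℂ))
      =ᵐ[(muI a b).prod (muI c d)] 0 :=
    by
    have h2 := (aux_memLp_s12 a b c d p q).coeFn_toLp
    have h3 : (aux_memLp_s12 a b c d p q).toLp _ = 0 := hp
    rw [h3] at h2
    exact h2.symm.trans (Lp.coeFn_zero _ _ _)
  have hF : ∀ᵐ z ∂((muI a b).prod (muI c d)), False := by
    filter_upwards [h1, Measure.quasiMeasurePreserving_fst.ae (aux_poly_ne a b p hp0),
      Measure.quasiMeasurePreserving_snd.ae (aux_poly_ne c d q hq)] with z h1 h2 h3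
    exact mul_ne_zero h2 h3 h1
  have h0 : ((muI a b).prod (muI c d)) Set.univ = 0 := by
    simpa [ae_iff] using hF
  rw [← Set.univ_prod_univ, Measure.prod_prod] at h0
  simp at h0
  rcases h0 with h0 | h0 <;> linarith

theorem aux_T1_s12 (a b c d : ℝ) (n : ℕ) (φ : Fin n → ℝ → ℂ)
    (hφ : ∀ k, MemLp (φ k) 2 (muI a b)) (h : Fin n → ℝ → ℝ) (p q : Polynomial ℂ)
    (hp : p ∈ LinearMap.ker (auxL a b n φ hφ)) :
    ∀ᵐ z ∂((muI a b).prod (muI c d)),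
      ∫ s, (∑ k, φ k z.1 * star (φ k s) * (h k z.2 : ℂ)) * (auxM a b c d q p) (s, z.2)
        ∂(muI a b) = 0 := by
  have h1 : ∀ᵐ z ∂((muI a b).prod (muI c d)), (auxM a b c d q p) z =
      p.eval (z.1 : ℂ) * q.eval (z.2 : ℂ) := (aux_memLp_s12 a b c d p q).coeFn_toLp
  have h2 : ∀ᵐ y ∂(muI c d), ∀ᵐ x ∂(muI a b), (auxM a b c d q p) (x, y) =
      p.eval (x : ℂ) * q.eval (y : ℂ) := by
    have h3 : ∀ᵐ z ∂((muI c d).prod (muI a b)), (auxM a b c d q p) z.swap =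
        p.eval (z.swap.1 : ℂ) * q.eval (z.swap.2 : ℂ) :=
      Measure.measurePreserving_swap.quasiMeasurePreserving.ae h1
    exact Measure.ae_ae_of_ae_prod h3
  filter_upwards [Measure.quasiMeasurePreserving_snd.ae h2] with z hz
  have h4 : ∫ s, (∑ k, φ k z.1 * star (φ k s) * (h k z.2 : ℂ)) * (auxM a b c d q p) (s, z.2)
        ∂(muI a b) = ∫ s, ∑ k, (φ k z.1 * (h k z.2 : ℂ) * q.eval (z.2 : ℂ)) *
          (star (φ k s) * p.eval (s : ℂ)) ∂(muI a b) := by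
    apply integral_congr_ae
    filter_upwards [hz] with s hs
    rw [hs, Finset.sum_mul]
    refine Finset.sum_congr rfl fun k _ => ?_
    ring
  rw [h4, integral_finsetSum _ fun k _ => (aux_poly_int a b p _ (hφ k)).const_mul _]
  refine Finset.sum_eq_zero fun k _ => ?_
  rw [integral_const_mul]
  have := congrFun (LinearMap.mem_ker.1 hp) k
  simp only [auxL, LinearMap.coe_mk, AddHom.coe_mk, Pi.zero_apply] at this
  rw [this, mul_zero]

theorem aux_T2_s12 (a b c d : ℝ) (n : ℕ) (φ : Fin n → ℝ → ℂ)
    (hφ : ∀ k, MemLp (φ k) 2 (muI c d)) (h : Fin n → ℝ → ℝ) (p q : Polynomial ℂ)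
    (hq : q ∈ LinearMap.ker (auxL c d n φ hφ)) :
    ∀ᵐ z ∂((muI a b).prod (muI c d)),
      ∫ t, (∑ k, (h k z.1 : ℂ) * φ k z.2 * star (φ k t)) * (auxM a b c d q p) (z.1, t)
        ∂(muI c d) = 0 := by
  have h1 : ∀ᵐ z ∂((muI a b).prod (muI c d)), (auxM a b c d q p) z =
      p.eval (z.1 : ℂ) * q.eval (z.2 : ℂ) := (aux_memLp_s12 a b c d p q).coeFn_toLp
  have h2 : ∀ᵐ x ∂(muI a b), ∀ᵐ y ∂(muI c d), (auxM a b c d q p) (x, y) =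
      p.eval (x : ℂ) * q.eval (y : ℂ) := Measure.ae_ae_of_ae_prod h1
  filter_upwards [Measure.quasiMeasurePreserving_fst.ae h2] with z hz
  have h4 : ∫ t, (∑ k, (h k z.1 : ℂ) * φ k z.2 * star (φ k t)) * (auxM a b c d q p) (z.1, t)
        ∂(muI c d) = ∫ t, ∑ k, ((h k z.1 : ℂ) * φ k z.2 * p.eval (z.1 : ℂ)) *
          (star (φ k t) * q.eval (t : ℂ)) ∂(muI c d) := by
    apply integral_congr_ae
    filter_upwards [hz] with s hs
    rw [hs, Finset.sum_mul]
    refine Finset.sum_congr rfl fun k _ => ?_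
    ring
  rw [h4, integral_finsetSum _ fun k _ => (aux_poly_int c d q _ (hφ k)).const_mul _]
  refine Finset.sum_eq_zero fun k _ => ?_
  rw [integral_const_mul]
  have := congrFun (LinearMap.mem_ker.1 hq) k
  simp only [auxL, LinearMap.coe_mk, AddHom.coe_mk, Pi.zero_apply] at this
  rw [this, mul_zero]

theorem statement12
    (a b c d : ℝ) (hab : a < b) (hcd : c < d)
    (n : ℕ) (hn : 1 ≤ n)
    (φ : Fin n → ℝ → ℂ)
    (hφL2 : ∀ k, MemLp (φ k) 2 (muI a b))
    (hφON : ∀ i j, ∫ x, star (φ i x) * φ j x ∂(muI a b) = if i = j then 1 else 0)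
    (h : Fin n → ℝ → ℝ)
    (hhmeas : ∀ k, Measurable (h k))
    (hhbdd : ∀ k, ∃ C : ℝ, ∀ᵐ y ∂(muI c d), |h k y| ≤ C)
    (m : ℕ) (hm : 1 ≤ m)
    (ψ : Fin m → ℝ → ℂ)
    (hψL2 : ∀ j, MemLp (ψ j) 2 (muI c d))
    (hψON : ∀ i j, ∫ y, star (ψ i y) * ψ j y ∂(muI c d) = if i = j then 1 else 0)
    (p : Fin m → ℝ → ℝ)
    (hpmeas : ∀ j, Measurable (p j))
    (hpbdd : ∀ j, ∃ C : ℝ, ∀ᵐ x ∂(muI a b), |p j x| ≤ C)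
    (T1 T2 : Lp ℂ 2 ((muI a b).prod (muI c d)) →L[ℂ] Lp ℂ 2 ((muI a b).prod (muI c d)))
    (hT1sa : IsSelfAdjoint T1) (hT2sa : IsSelfAdjoint T2)
    (hT1 : ∀ f : Lp ℂ 2 ((muI a b).prod (muI c d)),
      ∀ᵐ z ∂((muI a b).prod (muI c d)),
        T1 f z = ∫ s, (∑ k, φ k z.1 * star (φ k s) * (h k z.2 : ℂ)) * f (s, z.2) ∂(muI a b))
    (hT2 : ∀ f : Lp ℂ 2 ((muI a b).prod (muI c d)),
      ∀ᵐ z ∂((muI a b).prod (muI c d)),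
        T2 f z = ∫ t, (∑ j, (p j z.1 : ℂ) * ψ j z.2 * star (ψ j t)) * f (z.1, t) ∂(muI c d))
    :
    ¬ FiniteDimensional ℂ ↥(LinearMap.ker (T1 + T2).toLinearMap) := by
  intro hfd
  obtain ⟨q, hq, hq0⟩ : ∃ q ∈ LinearMap.ker (auxL c d m ψ hψL2), q ≠ 0 := by
    apply Submodule.exists_mem_ne_zero_of_ne_bot
    intro hbot
    apply auxL_ker_inf c d m ψ hψL2
    rw [hbot]
    infer_instance
  apply auxL_ker_inf a b n φ hφL2
  have hmem : ∀ r : LinearMap.ker (auxL a b n φ hφL2),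
      ((auxM a b c d q).comp (Submodule.subtype _)) r ∈
        LinearMap.ker (T1 + T2).toLinearMap := by
    intro r
    have e1 : T1 (auxM a b c d q r) = 0 := by
      apply Lp.ext
      filter_upwards [hT1 (auxM a b c d q r), aux_T1_s12 a b c d n φ hφL2 h r q r.2,
        Lp.coeFn_zero ℂ 2 ((muI a b).prod (muI c d))] with z h1 h2 h3
      rw [h1, h2, h3]
      rfl
    have e2 : T2 (auxM a b c d q r) = 0 := by
      apply Lp.ext
      filter_upwards [hT2 (auxM a b c d q r), aux_T2_s12 a b c d m ψ hψL2 p r q hq,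
        Lp.coeFn_zero ℂ 2 ((muI a b).prod (muI c d))] with z h1 h2 h3
      rw [h1, h2, h3]
      rfl
    rw [LinearMap.mem_ker]
    change T1 (auxM a b c d q r) + T2 (auxM a b c d q r) = 0
    rw [e1, e2, add_zero]
  refine FiniteDimensional.of_injective
    (LinearMap.codRestrict (LinearMap.ker (T1 + T2).toLinearMap)
      ((auxM a b c d q).comp (Submodule.subtype _)) hmem) ?_
  intro r s hrs
  have := congrArg Subtype.val hrs
  exact Subtype.ext (auxM_inj a b c d hab hcd q hq0 this)
end
end

section
/- The function Δ(z) is holomorphic on the open domain G = ℂ \ (σ(T₁) ∪ σ(T₂)). -/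
open MeasureTheory Complex

noncomputable section

lemma aux_bddBelow {E : Type*} [NormedAddCommGroup E] [NormedSpace ℂ E]
    (T : E →L[ℂ] E) (z : ℂ) (hz : z ∉ spectrum ℂ T) :
    ∃ ε : ℝ, 0 < ε ∧ ∀ f : E, ε * ‖f‖ ≤ ‖z • f - T f‖ := by
  rw [spectrum.notMem_iff] at hz
  obtain ⟨S, hS⟩ := hz.exists_left_inv
  refine ⟨1 / (‖S‖ + 1), by positivity, fun f => ?_⟩
  have h1 : S (z • f - T f) = f := by
    have := congrArg (fun A : E →L[ℂ] E => A f) hS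
    simpa [Algebra.algebraMap_eq_smul_one] using this
  have h2 : ‖f‖ ≤ ‖S‖ * ‖z • f - T f‖ := by
    conv_lhs => rw [← h1]
    exact S.le_opNorm _
  have h3 : 0 ≤ ‖z • f - T f‖ := norm_nonneg _
  rw [div_mul_eq_mul_div, one_mul, div_le_iff₀ (by positivity)]
  nlinarith

lemma aux_zero_s17 {α : Type*} [MeasurableSpace α] (ρ : Measure α)
    (T : Lp ℂ 2 ρ →L[ℂ] Lp ℂ 2 ρ) (z : ℂ) (hz : z ∉ spectrum ℂ T) :
    ∃ ε : ℝ, 0 < ε ∧ ∀ (v : α → ℂ) (u : α → ℝ), MemLp v 2 ρ →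
      (∀ f : Lp ℂ 2 ρ, f =ᵐ[ρ] v → ∀ᵐ w ∂ρ, T f w = u w * v w) →
      (∀ w, v w ≠ 0 → ‖z - u w‖ < ε) → v =ᵐ[ρ] 0 := by
  obtain ⟨ε, hε, hb⟩ := aux_bddBelow T z hz
  refine ⟨ε / 2, by positivity, fun v u hv hT hu => ?_⟩
  have hf := hv.coeFn_toLp
  have hTf := hT _ hf
  set f := hv.toLp v with hfdef
  have h1 : ‖z • f - T f‖ ≤ ε / 2 * ‖f‖ := by
    apply Lp.norm_le_mul_norm_of_ae_le_mul
    filter_upwards [hf, hTf, Lp.coeFn_sub (z • f) (T f), Lp.coeFn_smul z f] with w h1 h2 h3 h4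
    rw [h3, Pi.sub_apply, h4, Pi.smul_apply, h2, h1, smul_eq_mul, ← sub_mul, norm_mul]
    by_cases h0 : v w = 0
    · simp [h0]
    · exact mul_le_mul_of_nonneg_right (hu w h0).le (norm_nonneg _)
  have h2 := hb f
  have h3 : ‖f‖ = 0 := by
    have := norm_nonneg f
    nlinarith
  have h4 : f = 0 := norm_eq_zero.mp h3
  have h5 := Lp.coeFn_zero ℂ 2 ρ
  rw [← h4] at h5
  exact hf.symm.trans h5

lemma aux_swap {α β : Type*} [MeasurableSpace α] [MeasurableSpace β] (μ : Measure α)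
    (ν : Measure β) [IsFiniteMeasure μ] [IsFiniteMeasure ν] {P : α × β → Prop}
    (h : ∀ᵐ w ∂(μ.prod ν), P w) : ∀ᵐ y ∂ν, ∀ᵐ x ∂μ, P (x, y) := by
  have h1 : ∀ᵐ w ∂(ν.prod μ), P w.swap :=
    (Measure.measurePreserving_swap (μ := ν) (ν := μ)).quasiMeasurePreserving.ae h
  exact Measure.ae_ae_of_ae_prod h1

lemma aux_gap1 {α β : Type*} [MeasurableSpace α] [MeasurableSpace β] (μ : Measure α)
    (ν : Measure β) [IsFiniteMeasure μ] [IsFiniteMeasure ν] {n : ℕ} (φ : Fin n → α → ℂ)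
    (hφL2 : ∀ k, MemLp (φ k) 2 μ)
    (hφON : ∀ i j, ∫ x, star (φ i x) * φ j x ∂μ = if i = j then 1 else 0)
    (h : Fin n → β → ℝ) (hm : ∀ k, Measurable (h k))
    (T : Lp ℂ 2 (μ.prod ν) →L[ℂ] Lp ℂ 2 (μ.prod ν))
    (hT : ∀ f : Lp ℂ 2 (μ.prod ν), ∀ᵐ z ∂(μ.prod ν),
        T f z = ∫ s, (∑ k, φ k z.1 * star (φ k s) * (h k z.2 : ℂ)) * f (s, z.2) ∂μ)
    (z : ℂ) (hz : z ∉ spectrum ℂ T) (j : Fin n) :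
    ∃ ε : ℝ, 0 < ε ∧ ∀ᵐ y ∂ν, ε ≤ ‖z - h j y‖ := by
  obtain ⟨ε, hε, H⟩ := aux_zero_s17 _ T z hz
  refine ⟨ε, hε, ?_⟩
  set S : Set β := {y | ‖z - h j y‖ < ε} with hSdef
  have hS : MeasurableSet S := by
    apply measurableSet_lt _ measurable_const
    have := hm j
    fun_prop
  set v : α × β → ℂ := (Prod.snd ⁻¹' S).indicator (fun w => φ j w.1) with hv
  have hvL : MemLp v 2 (μ.prod ν) := ((hφL2 j).comp_fst ν).indicator (measurable_snd hS)
  have hint : ∀ k, Integrable (fun s => star (φ k s) * φ j s) μ := fun k =>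
    MemLp.integrable_mul (hφL2 k).star (hφL2 j)
  have hv0 := H v (fun w => h j w.2) hvL (by
    intro f hf
    have hf2 := Measure.quasiMeasurePreserving_snd (μ := μ) (ν := ν) |>.ae (aux_swap μ ν hf)
    filter_upwards [hT f, hf2] with w h1 h2
    rw [h1]
    have : ∀ᵐ s ∂μ, (∑ k, φ k w.1 * star (φ k s) * (h k w.2 : ℂ)) * f (s, w.2) =
        ∑ k, (φ k w.1 * h k w.2 * S.indicator 1 w.2) * (star (φ k s) * φ j s) := by
      filter_upwards [h2] with s hs
      rw [hs, hv, Finset.sum_mul]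
      refine Finset.sum_congr rfl fun k _ => ?_
      by_cases hw : w.2 ∈ S
      · simp [Set.indicator, hw]; ring
      · simp [Set.indicator, hw]
    rw [integral_congr_ae this, integral_finsetSum _ (fun k _ => (hint k).const_mul _)]
    simp_rw [integral_const_mul, hφON]
    simp only [mul_ite, mul_one, mul_zero, Finset.sum_ite_eq', Finset.mem_univ, if_true]
    by_cases hw : w.2 ∈ S
    · simp [hv, Set.indicator, hw]; ring
    · simp [hv, Set.indicator, hw]) (by
    intro w hw
    by_contra hc
    exact hw (by simp [hv, Set.indicator, hSdef, hc]))
  filter_upwards [aux_swap μ ν hv0] with y hy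
  by_contra hc
  have hyS : y ∈ S := not_le.mp hc
  have h0 : ∀ᵐ x ∂μ, star (φ j x) * φ j x = 0 := by
    filter_upwards [hy] with x hx
    have : φ j x = 0 := by simpa [hv, Set.indicator, hyS] using hx
    simp [this]
  have h1 := hφON j j
  rw [integral_congr_ae h0] at h1
  simp at h1

lemma aux_gap2 {α β : Type*} [MeasurableSpace α] [MeasurableSpace β] (μ : Measure α)
    (ν : Measure β) [IsFiniteMeasure μ] [IsFiniteMeasure ν] {n : ℕ} (φ : Fin n → β → ℂ)
    (hφL2 : ∀ k, MemLp (φ k) 2 ν)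
    (hφON : ∀ i j, ∫ x, star (φ i x) * φ j x ∂ν = if i = j then 1 else 0)
    (h : Fin n → α → ℝ) (hm : ∀ k, Measurable (h k))
    (T : Lp ℂ 2 (μ.prod ν) →L[ℂ] Lp ℂ 2 (μ.prod ν))
    (hT : ∀ f : Lp ℂ 2 (μ.prod ν), ∀ᵐ z ∂(μ.prod ν),
        T f z = ∫ t, (∑ k, (h k z.1 : ℂ) * φ k z.2 * star (φ k t)) * f (z.1, t) ∂ν)
    (z : ℂ) (hz : z ∉ spectrum ℂ T) (j : Fin n) :
    ∃ ε : ℝ, 0 < ε ∧ ∀ᵐ y ∂μ, ε ≤ ‖z - h j y‖ := by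
  obtain ⟨ε, hε, H⟩ := aux_zero_s17 _ T z hz
  refine ⟨ε, hε, ?_⟩
  set S : Set α := {y | ‖z - h j y‖ < ε} with hSdef
  have hS : MeasurableSet S := by
    apply measurableSet_lt _ measurable_const
    have := hm j
    fun_prop
  set v : α × β → ℂ := (Prod.fst ⁻¹' S).indicator (fun w => φ j w.2) with hv
  have hvL : MemLp v 2 (μ.prod ν) := ((hφL2 j).comp_snd μ).indicator (measurable_fst hS)
  have hint : ∀ k, Integrable (fun s => star (φ k s) * φ j s) ν := fun k =>
    MemLp.integrable_mul (hφL2 k).star (hφL2 j)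
  have hv0 := H v (fun w => h j w.1) hvL (by
    intro f hf
    have hf2 := Measure.quasiMeasurePreserving_fst (μ := μ) (ν := ν) |>.ae
      (Measure.ae_ae_of_ae_prod hf)
    filter_upwards [hT f, hf2] with w h1 h2
    rw [h1]
    have : ∀ᵐ s ∂ν, (∑ k, (h k w.1 : ℂ) * φ k w.2 * star (φ k s)) * f (w.1, s) =
        ∑ k, (φ k w.2 * h k w.1 * S.indicator 1 w.1) * (star (φ k s) * φ j s) := by
      filter_upwards [h2] with s hs
      rw [hs, hv, Finset.sum_mul]
      refine Finset.sum_congr rfl fun k _ => ?_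
      by_cases hw : w.1 ∈ S
      · simp [Set.indicator, hw]; ring
      · simp [Set.indicator, hw]
    rw [integral_congr_ae this, integral_finsetSum _ (fun k _ => (hint k).const_mul _)]
    simp_rw [integral_const_mul, hφON]
    simp only [mul_ite, mul_one, mul_zero, Finset.sum_ite_eq', Finset.mem_univ, if_true]
    by_cases hw : w.1 ∈ S
    · simp [hv, Set.indicator, hw]; ring
    · simp [hv, Set.indicator, hw]) (by
    intro w hw
    by_contra hc
    exact hw (by simp [hv, Set.indicator, hSdef, hc]))
  filter_upwards [Measure.ae_ae_of_ae_prod hv0] with y hy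
  by_contra hc
  have hyS : y ∈ S := not_le.mp hc
  have h0 : ∀ᵐ x ∂ν, star (φ j x) * φ j x = 0 := by
    filter_upwards [hy] with x hx
    have : φ j x = 0 := by simpa [hv, Set.indicator, hyS] using hx
    simp [this]
  have h1 := hφON j j
  rw [integral_congr_ae h0] at h1
  simp at h1

lemma aux_int_s17 {α : Type*} [MeasurableSpace α] (μ : Measure α) (u : α → ℝ) (hu : Measurable u)
    (C : ℝ) (hC : ∀ᵐ y ∂μ, |u y| ≤ C) (g : α → ℂ) (hg : Integrable g μ) (z : ℂ) (ε : ℝ)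
    (hε : 0 < ε) (hgap : ∀ᵐ y ∂μ, ε ≤ ‖z - u y‖) :
    Integrable (fun y => (u y : ℂ) / (z - u y) * g y) μ := by
  refine hg.bdd_mul (c := C / ε) (Measurable.aestronglyMeasurable (by fun_prop)) ?_
  filter_upwards [hC, hgap] with y h1 h2
  rw [norm_div, Complex.norm_real, Real.norm_eq_abs]
  have hC0 : 0 ≤ C := (abs_nonneg (u y)).trans h1
  gcongr

lemma aux_diff {α : Type*} [MeasurableSpace α] (μ : Measure α) (u : α → ℝ) (hu : Measurable u)
    (C : ℝ) (hC : ∀ᵐ y ∂μ, |u y| ≤ C) (g : α → ℂ) (hg : Integrable g μ) (z : ℂ) (ε : ℝ)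
    (hε : 0 < ε) (hgap : ∀ᵐ y ∂μ, ε ≤ ‖z - u y‖) :
    DifferentiableAt ℂ (fun z => ∫ y, (u y : ℂ) / (z - u y) * g y ∂μ) z := by
  have key : ∀ᵐ y ∂μ, ∀ w ∈ Metric.ball z (ε / 2), ε / 2 ≤ ‖w - u y‖ := by
    filter_upwards [hgap] with y hy w hw
    rw [Metric.mem_ball, dist_eq_norm] at hw
    have : ‖z - u y‖ ≤ ‖w - u y‖ + ‖w - z‖ := by
      have := norm_sub_le (w - u y) (w - z)
      simpa using this
    linarith
  have hgm := hg.aestronglyMeasurable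
  refine (hasDerivAt_integral_of_dominated_loc_of_deriv_le
    (F := fun w y => (u y : ℂ) / (w - u y) * g y)
    (F' := fun w y => -(u y : ℂ) / (w - u y) ^ 2 * g y)
    (bound := fun y => C / (ε / 2) ^ 2 * ‖g y‖)
    (Metric.ball_mem_nhds z (half_pos hε)) ?_ ?_ ?_ ?_ ?_ ?_).2.differentiableAt
  · refine Filter.Eventually.of_forall fun w => ?_
    have : AEStronglyMeasurable (fun y => (u y : ℂ) / (w - u y)) μ :=
      Measurable.aestronglyMeasurable (by fun_prop)
    exact this.mul hgm
  · exact aux_int_s17 μ u hu C hC g hg z ε hε hgap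
  · have : AEStronglyMeasurable (fun y => -(u y : ℂ) / (z - u y) ^ 2) μ :=
      Measurable.aestronglyMeasurable (by fun_prop)
    exact this.mul hgm
  · filter_upwards [key, hC] with y hy h1 w hw
    rw [norm_mul, norm_div, norm_neg, norm_pow, Complex.norm_real, Real.norm_eq_abs]
    have hC0 : 0 ≤ C := (abs_nonneg (u y)).trans h1
    have := hy w hw
    gcongr
  · exact hg.norm.const_mul _
  · filter_upwards [key] with y hy w hw
    have hne : w - u y ≠ 0 := by
      have := hy w hw
      exact norm_pos_iff.mp (by linarith)
    have h1 : HasDerivAt (fun w : ℂ => w - (u y : ℂ)) 1 w := (hasDerivAt_id' w).sub_const _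
    have h2 := ((hasDerivAt_const w (u y : ℂ)).fun_div h1 hne).mul_const (g y)
    exact h2.congr_deriv (by simp)

theorem statement17
    (a b c d : ℝ) (hab : a < b) (hcd : c < d)
    (n : ℕ) (hn : 1 ≤ n)
    (φ : Fin n → ℝ → ℂ)
    (hφL2 : ∀ k, MemLp (φ k) 2 (muI a b))
    (hφON : ∀ i j, ∫ x, star (φ i x) * φ j x ∂(muI a b) = if i = j then 1 else 0)
    (h : Fin n → ℝ → ℝ)
    (hhmeas : ∀ k, Measurable (h k))
    (hhbdd : ∀ k, ∃ C : ℝ, ∀ᵐ y ∂(muI c d), |h k y| ≤ C)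
    (m : ℕ) (hm : 1 ≤ m)
    (ψ : Fin m → ℝ → ℂ)
    (hψL2 : ∀ j, MemLp (ψ j) 2 (muI c d))
    (hψON : ∀ i j, ∫ y, star (ψ i y) * ψ j y ∂(muI c d) = if i = j then 1 else 0)
    (p : Fin m → ℝ → ℝ)
    (hpmeas : ∀ j, Measurable (p j))
    (hpbdd : ∀ j, ∃ C : ℝ, ∀ᵐ x ∂(muI a b), |p j x| ≤ C)
    (T1 T2 : Lp ℂ 2 ((muI a b).prod (muI c d)) →L[ℂ] Lp ℂ 2 ((muI a b).prod (muI c d)))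
    (hT1sa : IsSelfAdjoint T1) (hT2sa : IsSelfAdjoint T2)
    (hT1 : ∀ f : Lp ℂ 2 ((muI a b).prod (muI c d)),
      ∀ᵐ z ∂((muI a b).prod (muI c d)),
        T1 f z = ∫ s, (∑ k, φ k z.1 * star (φ k s) * (h k z.2 : ℂ)) * f (s, z.2) ∂(muI a b))
    (hT2 : ∀ f : Lp ℂ 2 ((muI a b).prod (muI c d)),
      ∀ᵐ z ∂((muI a b).prod (muI c d)),
        T2 f z = ∫ t, (∑ j, (p j z.1 : ℂ) * ψ j z.2 * star (ψ j t)) * f (z.1, t) ∂(muI c d))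
    -- the functions F_ω(x, y; z) for ω = (k, j) ∈ Γ = {1,…,m} × {1,…,n}
    (F : Fin m × Fin n → ℝ → ℝ → ℂ → ℂ)
    (hF : ∀ ω x y, ∀ z : ℂ, z ∉ spectrum ℂ T1 ∪ spectrum ℂ T2 → F ω x y z =
      φ ω.2 x * (ψ ω.1 y * (h ω.2 y : ℂ) / (z - (h ω.2 y : ℂ)) +
        ∑ i, ((p i x : ℂ) * ψ i y / (z - (p i x : ℂ))) *
          ∫ ξ, ((h ω.2 ξ : ℂ) / (z - (h ω.2 ξ : ℂ))) * ψ ω.1 ξ * star (ψ i ξ) ∂(muI c d)))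
    -- the functions B_ω(s, t)
    (B : Fin m × Fin n → ℝ → ℝ → ℂ)
    (hB : ∀ ω s t, B ω s t = (p ω.1 s : ℂ) * star (φ ω.2 s) * star (ψ ω.1 t))
    -- the functions Π_{ω,ω'}(z)
    (Pmat : ℂ → Fin m × Fin n → Fin m × Fin n → ℂ)
    (hPmat : ∀ z ω ω', Pmat z ω ω' =
      ∫ x, (∫ y, F ω x y z * B ω' x y ∂(muI c d)) ∂(muI a b))
    -- the function Δ(z)
    (Δ : ℂ → ℂ)
    (hΔ : ∀ z, Δ z = Matrix.det
      (Matrix.of fun ω ω' : Fin m × Fin n => Pmat z ω ω' - if ω = ω' then z else 0)) :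
    DifferentiableOn ℂ Δ ((spectrum ℂ T1 ∪ spectrum ℂ T2)ᶜ) := by
  choose Ch hCh using hhbdd
  choose Cp hCp using hpbdd
  have gap1 := aux_gap1 (muI a b) (muI c d) φ hφL2 hφON h hhmeas T1 hT1
  have gap2 := aux_gap2 (muI a b) (muI c d) ψ hψL2 hψON p hpmeas T2 hT2
  have hψψ : ∀ k i, Integrable (fun y => ψ k y * star (ψ i y)) (muI c d) := fun k i =>
    MemLp.integrable_mul (hψL2 k) (hψL2 i).star
  have hφφ : ∀ k i, Integrable (fun y => φ k y * star (φ i y)) (muI a b) := fun k i =>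
    MemLp.integrable_mul (hφL2 k) (hφL2 i).star
  have hP : ∀ l k i, Integrable (fun x => (p l x : ℂ) * (φ k x * star (φ i x))) (muI a b) := by
    intro l k i
    have := hpmeas l
    refine (hφφ k i).bdd_mul (c := Cp l) (by fun_prop) ?_
    filter_upwards [hCp l] with x hx
    simpa using hx
  have hform : ∀ ω ω', ∀ z ∈ (spectrum ℂ T1 ∪ spectrum ℂ T2)ᶜ, Pmat z ω ω' =
      (∫ x, (p ω'.1 x : ℂ) * (φ ω.2 x * star (φ ω'.2 x)) ∂(muI a b)) *
        (∫ y, (h ω.2 y : ℂ) / (z - h ω.2 y) * (ψ ω.1 y * star (ψ ω'.1 y)) ∂(muI c d)) +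
      ∑ i, (∫ x, (p i x : ℂ) / (z - p i x) *
            ((p ω'.1 x : ℂ) * (φ ω.2 x * star (φ ω'.2 x))) ∂(muI a b)) *
        ((∫ ξ, (h ω.2 ξ : ℂ) / (z - h ω.2 ξ) * (ψ ω.1 ξ * star (ψ i ξ)) ∂(muI c d)) *
          ∫ y, ψ i y * star (ψ ω'.1 y) ∂(muI c d)) := by
    intro ω ω' z hz
    have hz1 : z ∉ spectrum ℂ T1 := fun hh => hz (Or.inl hh)
    have hz2 : z ∉ spectrum ℂ T2 := fun hh => hz (Or.inr hh)
    have I1 : ∀ i, Integrable (fun y => (h ω.2 y : ℂ) / (z - h ω.2 y) *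
        (ψ ω.1 y * star (ψ i y))) (muI c d) := by
      intro i
      obtain ⟨ε, hε, hg⟩ := gap1 z hz1 ω.2
      exact aux_int_s17 _ _ (hhmeas _) _ (hCh _) _ (hψψ _ _) z ε hε hg
    have I2 : ∀ i, Integrable (fun x => (p i x : ℂ) / (z - p i x) *
            ((p ω'.1 x : ℂ) * (φ ω.2 x * star (φ ω'.2 x)))) (muI a b) := by
      intro i
      obtain ⟨ε, hε, hg⟩ := gap2 z hz2 i
      exact aux_int_s17 _ _ (hpmeas _) _ (hCp _) _ (hP _ _ _) z ε hε hg
    have inner : ∀ x, ∫ y, F ω x y z * B ω' x y ∂(muI c d) =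
        ((p ω'.1 x : ℂ) * (φ ω.2 x * star (φ ω'.2 x))) *
        (∫ y, (h ω.2 y : ℂ) / (z - h ω.2 y) * (ψ ω.1 y * star (ψ ω'.1 y)) ∂(muI c d)) +
      ∑ i, ((p i x : ℂ) / (z - p i x) *
            ((p ω'.1 x : ℂ) * (φ ω.2 x * star (φ ω'.2 x)))) *
        ((∫ ξ, (h ω.2 ξ : ℂ) / (z - h ω.2 ξ) * (ψ ω.1 ξ * star (ψ i ξ)) ∂(muI c d)) *
          ∫ y, ψ i y * star (ψ ω'.1 y) ∂(muI c d)) := by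
      intro x
      have e : ∀ y, F ω x y z * B ω' x y =
          ((p ω'.1 x : ℂ) * (φ ω.2 x * star (φ ω'.2 x))) *
          ((h ω.2 y : ℂ) / (z - h ω.2 y) * (ψ ω.1 y * star (ψ ω'.1 y))) +
          ∑ i, (((p i x : ℂ) / (z - p i x) *
            ((p ω'.1 x : ℂ) * (φ ω.2 x * star (φ ω'.2 x)))) *
            (∫ ξ, (h ω.2 ξ : ℂ) / (z - h ω.2 ξ) * (ψ ω.1 ξ * star (ψ i ξ)) ∂(muI c d))) *
            (ψ i y * star (ψ ω'.1 y)) := by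
        intro y
        rw [hF ω x y z hz, hB, mul_add, add_mul, Finset.mul_sum, Finset.sum_mul]
        congr 1
        · ring
        · refine Finset.sum_congr rfl fun i _ => ?_
          simp_rw [mul_assoc]
          ring
      simp_rw [e]
      rw [integral_add ((I1 _).const_mul _)
        (integrable_finsetSum _ fun i _ => (hψψ _ _).const_mul _),
        integral_finsetSum _ fun i _ => (hψψ _ _).const_mul _]
      simp_rw [integral_const_mul, mul_assoc]
    rw [hPmat]
    simp_rw [inner]
    rw [integral_add ((hP _ _ _).mul_const _)
        (integrable_finsetSum _ fun i _ => (I2 _).mul_const _),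
        integral_finsetSum _ fun i _ => (I2 _).mul_const _]
    simp_rw [integral_mul_const]
  have hdiff : ∀ ω ω', DifferentiableOn ℂ (fun z => Pmat z ω ω')
      ((spectrum ℂ T1 ∪ spectrum ℂ T2)ᶜ) := by
    intro ω ω'
    refine DifferentiableOn.congr ?_ (hform ω ω')
    intro z hz
    have hz1 : z ∉ spectrum ℂ T1 := fun hh => hz (Or.inl hh)
    have hz2 : z ∉ spectrum ℂ T2 := fun hh => hz (Or.inr hh)
    have D1 : ∀ i, DifferentiableAt ℂ (fun z => ∫ y, (h ω.2 y : ℂ) / (z - h ω.2 y) *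
        (ψ ω.1 y * star (ψ i y)) ∂(muI c d)) z := by
      intro i
      obtain ⟨ε, hε, hg⟩ := gap1 z hz1 ω.2
      exact aux_diff _ _ (hhmeas _) _ (hCh _) _ (hψψ _ _) z ε hε hg
    have D2 : ∀ i, DifferentiableAt ℂ (fun z => ∫ x, (p i x : ℂ) / (z - p i x) *
            ((p ω'.1 x : ℂ) * (φ ω.2 x * star (φ ω'.2 x))) ∂(muI a b)) z := by
      intro i
      obtain ⟨ε, hε, hg⟩ := gap2 z hz2 i
      exact aux_diff _ _ (hpmeas _) _ (hCp _) _ (hP _ _ _) z ε hε hg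
    refine DifferentiableAt.differentiableWithinAt ?_
    refine ((D1 _).const_mul _).add ?_
    exact DifferentiableAt.fun_sum fun i _ => (D2 i).mul ((D1 i).mul_const _)
  have hΔ' : Δ = fun z => Matrix.det
      (Matrix.of fun ω ω' : Fin m × Fin n => Pmat z ω ω' - if ω = ω' then z else 0) := funext hΔ
  rw [hΔ']
  simp_rw [Matrix.det_apply, Matrix.of_apply]
  refine DifferentiableOn.fun_sum fun σ _ => DifferentiableOn.const_smul ?_ _
  refine DifferentiableOn.fun_finsetProd fun i _ => (hdiff _ _).sub ?_
  split_ifs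
  · exact differentiableOn_id
  · exact differentiableOn_const _
end
end
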